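/- For initial data u^{in} ∈ V_d and forcing f ∈ V_d with d ≥ 1, there exists T > 0 such that the inviscid sabra shell model du/dt + B(u,u) = f, u(0) = u^{in}, has a unique solution u ∈ C¹((−T, T), V_d). -/

import Mathlib

open Complex

/-- Wavenumbers of the sabra shell model: `k n = k0 * λ^n`. -/
noncomputable def kk (k0 lam : ℝ) (n : ℤ) : ℝ := k0 * lam ^ n

/-- Nonlinear term of the sabra shell model. -/
noncomputable def sB (a b c k0 lam : ℝ) (u : ℤ → ℂ) (n : ℤ) : ℂ :=
  -Complex.I * ((a : ℂ) * (kk k0 lam (n + 1) : ℝ) * u (n + 2) * (starRingEnd ℂ) (u (n + 1))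
    + (b : ℂ) * (kk k0 lam n : ℝ) * u (n + 1) * (starRingEnd ℂ) (u (n - 1))
    - (c : ℂ) * (kk k0 lam (n - 1) : ℝ) * u (n - 1) * u (n - 2))

/-- Membership in `V_r`. -/
def InV (k0 lam r : ℝ) (u : ℤ → ℂ) : Prop :=
  (∀ n : ℤ, n ≤ 0 → u n = 0) ∧
  Summable fun n : ℕ => (kk k0 lam ((n : ℤ) + 1)) ^ (2 * r) * ‖u ((n : ℤ) + 1)‖ ^ 2

/-- A `C¹((-T,T), V_d)` solution of `du/dt + B(u,u) = f`, `u(0) = u^{in}`: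
componentwise ODE, `u(t) ∈ V_d`, and continuity in the `V_d` norm of `u` and of its
derivative `f - B(u,u)` on `(-T,T)`. -/
def IsC1Solution (a b c k0 lam d T : ℝ) (uin f : ℤ → ℂ) (u : ℝ → ℤ → ℂ) : Prop :=
  (∀ n : ℤ, u 0 n = uin n) ∧
  (∀ t : ℝ, ∀ n : ℤ, n ≤ 0 → u t n = 0) ∧
  (∀ t ∈ Set.Ioo (-T) T, InV k0 lam d (u t) ∧
    ∀ n : ℤ, 1 ≤ n → HasDerivAt (fun s => u s n) (f n - sB a b c k0 lam (u t) n) t) ∧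
  ContinuousOn (fun t => ∑' n : ℕ,
    (kk k0 lam ((n : ℤ) + 1)) ^ (2 * d) * ‖u t ((n : ℤ) + 1)‖ ^ 2) (Set.Ioo (-T) T) ∧
  ContinuousOn (fun t => ∑' n : ℕ,
    (kk k0 lam ((n : ℤ) + 1)) ^ (2 * d) *
      ‖f ((n : ℤ) + 1) - sB a b c k0 lam (u t) ((n : ℤ) + 1)‖ ^ 2) (Set.Ioo (-T) T)

/-- If all derivatives of a family vanishing at `0` are controlled by the sup of the family,
then a uniformly bounded family vanishes. -/
lemma eq_zero_of_norm_deriv_le_mul_sup {ι : Type*} {z z' : ι → ℝ → ℂ} {τ L M : ℝ}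
    (h0 : ∀ i, z i 0 = 0)
    (hd : ∀ i, ∀ t ∈ Set.Icc 0 τ, HasDerivAt (z i) (z' i t) t)
    (hb : ∀ i, ∀ t ∈ Set.Icc 0 τ, ‖z i t‖ ≤ M) (hL : 0 ≤ L)
    (hl : ∀ t ∈ Set.Icc 0 τ, ∀ Z, (∀ i, ‖z i t‖ ≤ Z) → ∀ i, ‖z' i t‖ ≤ L * Z) :
    ∀ i, ∀ t ∈ Set.Icc 0 τ, z i t = 0 := by
  have key : ∀ j : ℕ, ∀ i, ∀ t ∈ Set.Icc 0 τ,
      ‖z i t‖ ≤ M * (1 / 2) ^ j * Real.exp (2 * L * t) := by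
    intro j
    induction j with
    | zero =>
      intro i t ht
      have hM : 0 ≤ M := (norm_nonneg _).trans (hb i t ht)
      have : 1 ≤ Real.exp (2 * L * t) := by
        apply Real.one_le_exp
        have := ht.1
        positivity
      have := hb i t ht
      nlinarith
    | succ j ih =>
      intro i t ht
      have hM : 0 ≤ M := (norm_nonneg _).trans (hb i t ht)
      refine image_norm_le_of_norm_deriv_right_le_deriv_boundary (f' := z' i)
        (B := fun t => M * (1 / 2) ^ (j + 1) * Real.exp (2 * L * t))
        (B' := fun t => M * (1 / 2) ^ (j + 1) * (Real.exp (2 * L * t) * (2 * L)))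
        (fun s hs => (hd i s hs).continuousAt.continuousWithinAt)
        (fun s hs => (hd i s (Set.Ico_subset_Icc_self hs)).hasDerivWithinAt)
        ?_ (fun s => ?_) (fun s hs => ?_) ht
      · rw [h0 i, norm_zero]
        positivity
      · have h : HasDerivAt (fun s : ℝ => 2 * L * s) (2 * L) s := by
          simpa using (hasDerivAt_id s).const_mul (2 * L)
        exact h.exp.const_mul _
      · have hs' := Set.Ico_subset_Icc_self hs
        refine (hl s hs' _ (fun i => ih i s hs') i).trans (le_of_eq ?_)
        ring
  intro i t ht
  have hlim : Filter.Tendsto (fun j : ℕ => M * (1 / 2 : ℝ) ^ j * Real.exp (2 * L * t))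
      Filter.atTop (nhds (M * 0 * Real.exp (2 * L * t))) :=
    ((tendsto_pow_atTop_nhds_zero_of_lt_one (by norm_num) (by norm_num)).const_mul M).mul_const _
  have := ge_of_tendsto' hlim (fun j => key j i t ht)
  simpa using this

/-- The space `ℓ²(ℤ, ℂ)`. -/
noncomputable abbrev SeqL2 := lp (fun _ : ℤ => ℂ) 2

lemma memℓp_shift_mul {m : ℤ → ℂ} {C : ℝ} (hm : ∀ n, ‖m n‖ ≤ C) (p q : ℤ) (x y : SeqL2) :
    Memℓp (fun n => m n * x (n + p) * y (n + q)) 2 ∧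
      ∑' n, ‖m n * x (n + p) * y (n + q)‖ ^ 2 ≤ (C * ‖x‖ * ‖y‖) ^ 2 := by
  have hC : 0 ≤ C := (norm_nonneg _).trans (hm 0)
  have hy : HasSum (fun n => ‖y n‖ ^ 2) (‖y‖ ^ 2) := by
    simpa using lp.hasSum_norm (p := 2) (by norm_num) y
  have hyq : HasSum (fun n => (C * ‖x‖) ^ 2 * ‖y (n + q)‖ ^ 2) ((C * ‖x‖) ^ 2 * ‖y‖ ^ 2) :=
    ((Equiv.addRight q).hasSum_iff.mpr hy).mul_left _
  have hle : ∀ n, ‖m n * x (n + p) * y (n + q)‖ ^ 2 ≤ (C * ‖x‖) ^ 2 * ‖y (n + q)‖ ^ 2 := by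
    intro n
    rw [← mul_pow, norm_mul, norm_mul]
    have := lp.norm_apply_le_norm (p := 2) (by norm_num) x (n + p)
    have := hm n
    gcongr
  have hs : Summable fun n => ‖m n * x (n + p) * y (n + q)‖ ^ 2 :=
    Summable.of_nonneg_of_le (fun _ => by positivity) hle hyq.summable
  refine ⟨memℓp_gen (by simpa using hs), ?_⟩
  rw [mul_pow, ← hyq.tsum_eq]
  exact hs.tsum_le_tsum hle hyq.summable

/-- The bounded bilinear map `(x, y) ↦ (m n * x (n + p) * y (n + q))ₙ` on `ℓ²(ℤ, ℂ)`. -/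
noncomputable def shiftMul (m : ℤ → ℂ) {C : ℝ} (hm : ∀ n, ‖m n‖ ≤ C) (p q : ℤ) :
    SeqL2 →L[ℝ] SeqL2 →L[ℝ] SeqL2 :=
  LinearMap.mkContinuous₂
    (LinearMap.mk₂ ℝ
      (fun x y => (⟨fun n => m n * x (n + p) * y (n + q), (memℓp_shift_mul hm p q x y).1⟩ : SeqL2))
      (fun x x' y => by ext n; simp only [lp.coeFn_add, Pi.add_apply]; ring)
      (fun r x y => by ext n; simp [mul_assoc, mul_left_comm])
      (fun x y y' => by ext n; simp only [lp.coeFn_add, Pi.add_apply]; ring)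
      (fun r x y => by ext n; simp [mul_left_comm])) C
    (fun x y => by
      have hC : 0 ≤ C := (norm_nonneg _).trans (hm 0)
      refine lp.norm_le_of_tsum_le (by norm_num) (by positivity) ?_
      simpa using (memℓp_shift_mul hm p q x y).2)

lemma shiftMul_apply (m : ℤ → ℂ) {C : ℝ} (hm : ∀ n, ‖m n‖ ≤ C) (p q : ℤ) (x y : SeqL2) (n : ℤ) :
    shiftMul m hm p q x y n = m n * x (n + p) * y (n + q) := rfl

/-- The quadratic nonlinearity with the shift structure of the sabra model. -/
noncomputable def sabraQuad (m₁ m₂ m₃ : ℤ → ℂ) (x : ℤ → ℂ) (n : ℤ) : ℂ :=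
  m₁ n * x (n + 2) * (starRingEnd ℂ) (x (n + 1))
    + m₂ n * x (n + 1) * (starRingEnd ℂ) (x (n + -1))
    + m₃ n * x (n + -1) * x (n + -2)

lemma norm_mul_mul_sub_le {m x y x' y' : ℂ} {C M Z : ℝ} (hm : ‖m‖ ≤ C) (hx : ‖x‖ ≤ M)
    (hy' : ‖y'‖ ≤ M) (hxx : ‖x - x'‖ ≤ Z) (hyy : ‖y - y'‖ ≤ Z) :
    ‖m * x * y - m * x' * y'‖ ≤ 2 * C * M * Z := by
  have hC : 0 ≤ C := (norm_nonneg _).trans hm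
  have hM : 0 ≤ M := (norm_nonneg _).trans hx
  calc ‖m * x * y - m * x' * y'‖ = ‖m * x * (y - y') + m * (x - x') * y'‖ := by congr 1; ring
    _ ≤ ‖m‖ * ‖x‖ * ‖y - y'‖ + ‖m‖ * ‖x - x'‖ * ‖y'‖ := by
        refine (norm_add_le _ _).trans (le_of_eq ?_)
        simp only [norm_mul]
    _ ≤ C * M * Z + C * Z * M := by
        have := (norm_nonneg _).trans hxx
        gcongr
    _ = 2 * C * M * Z := by ring

lemma norm_sabraQuad_sub_le {m₁ m₂ m₃ x y : ℤ → ℂ} {C M Z : ℝ}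
    (h₁ : ∀ n, ‖m₁ n‖ ≤ C) (h₂ : ∀ n, ‖m₂ n‖ ≤ C) (h₃ : ∀ n, ‖m₃ n‖ ≤ C)
    (hx : ∀ n, ‖x n‖ ≤ M) (hy : ∀ n, ‖y n‖ ≤ M) (hxy : ∀ n, ‖x n - y n‖ ≤ Z) (n : ℤ) :
    ‖sabraQuad m₁ m₂ m₃ x n - sabraQuad m₁ m₂ m₃ y n‖ ≤ 6 * C * M * Z := by
  have hconj : ∀ k, ‖(starRingEnd ℂ) (x k) - (starRingEnd ℂ) (y k)‖ ≤ Z := fun k => by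
    rw [← map_sub, RCLike.norm_conj]
    exact hxy k
  have hyc : ∀ k, ‖(starRingEnd ℂ) (y k)‖ ≤ M := fun k => by
    rw [RCLike.norm_conj]
    exact hy k
  have e₁ := norm_mul_mul_sub_le (h₁ n) (hx (n + 2)) (hyc (n + 1)) (hxy (n + 2)) (hconj (n + 1))
  have e₂ := norm_mul_mul_sub_le (h₂ n) (hx (n + 1)) (hyc (n + -1)) (hxy (n + 1)) (hconj (n + -1))
  have e₃ := norm_mul_mul_sub_le (h₃ n) (hx (n + -1)) (hy (n + -2)) (hxy (n + -1)) (hxy (n + -2))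
  have key := (norm_add₃_le).trans (add_le_add (add_le_add e₁ e₂) e₃)
  refine le_trans (le_of_eq ?_) (key.trans (le_of_eq (by ring)))
  congr 1
  unfold sabraQuad
  ring

/-- The vector field `g + sabraQuad` on `ℓ²(ℤ, ℂ)` is `C¹`. -/
lemma exists_contDiff_field {m₁ m₂ m₃ : ℤ → ℂ} {C : ℝ}
    (h₁ : ∀ n, ‖m₁ n‖ ≤ C) (h₂ : ∀ n, ‖m₂ n‖ ≤ C) (h₃ : ∀ n, ‖m₃ n‖ ≤ C) (g : SeqL2) :
    ∃ F : SeqL2 → SeqL2, ContDiff ℝ 1 F ∧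
      ∀ x n, F x n = g n + sabraQuad m₁ m₂ m₃ x n := by
  refine ⟨fun x => g + (shiftMul m₁ h₁ 2 1 x (starL' ℝ x) + shiftMul m₂ h₂ 1 (-1) x (starL' ℝ x)
    + shiftMul m₃ h₃ (-1) (-2) x x), ?_, fun x n => ?_⟩
  · have hs : ContDiff ℝ 1 fun x : SeqL2 => starL' ℝ x :=
      (starL' ℝ : SeqL2 ≃L[ℝ] SeqL2).contDiff
    have hT : ∀ T : SeqL2 →L[ℝ] SeqL2 →L[ℝ] SeqL2, ContDiff ℝ 1 fun x => T x :=
      fun T => T.contDiff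
    exact contDiff_const.add ((((hT _).clm_apply hs).add ((hT _).clm_apply hs)).add
      ((hT _).clm_apply contDiff_id))
  · simp only [lp.coeFn_add, Pi.add_apply, shiftMul_apply, sabraQuad]
    rfl

lemma kk_pos {k0 lam : ℝ} (hk0 : 0 < k0) (hlam : 1 < lam) (n : ℤ) : 0 < kk k0 lam n := by
  have : 0 < lam := by linarith
  unfold kk
  positivity

lemma le_kk {k0 lam : ℝ} (hk0 : 0 < k0) (hlam : 1 < lam) {n : ℤ} (hn : 0 ≤ n) :
    k0 ≤ kk k0 lam n := by
  unfold kk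
  exact le_mul_of_one_le_right hk0.le (one_le_zpow₀ hlam.le hn)

lemma kk_add {k0 lam : ℝ} (hlam : 1 < lam) (n p : ℤ) :
    kk k0 lam (n + p) = kk k0 lam n * lam ^ p := by
  unfold kk
  rw [zpow_add₀ (by linarith), mul_assoc]

/-- The weight `k_n^d` of the space `V_d`. -/
noncomputable def wt (k0 lam d : ℝ) (n : ℤ) : ℝ := kk k0 lam n ^ d

lemma wt_pos {k0 lam : ℝ} (hk0 : 0 < k0) (hlam : 1 < lam) (d : ℝ) (n : ℤ) :
    0 < wt k0 lam d n := Real.rpow_pos_of_pos (kk_pos hk0 hlam n) d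

lemma wt_add {k0 lam : ℝ} (hk0 : 0 < k0) (hlam : 1 < lam) (d : ℝ) (n p : ℤ) :
    wt k0 lam d (n + p) = wt k0 lam d n * (lam ^ p) ^ d := by
  have : 0 < lam := by linarith
  unfold wt
  rw [kk_add hlam, Real.mul_rpow (kk_pos hk0 hlam n).le (by positivity)]

lemma kk_rpow_mul_norm_sq {k0 lam : ℝ} (hk0 : 0 < k0) (hlam : 1 < lam) (d : ℝ) (n : ℤ) (v : ℂ) :
    kk k0 lam n ^ (2 * d) * ‖v‖ ^ 2 = ‖(wt k0 lam d n : ℂ) * v‖ ^ 2 := by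
  rw [norm_mul, mul_pow, Complex.norm_real, Real.norm_of_nonneg (wt_pos hk0 hlam d n).le, wt,
    mul_comm 2 d, Real.rpow_mul (kk_pos hk0 hlam n).le, Real.rpow_two]

/-- Coefficient of the nonlinear term after passing to the weighted unknowns `k_n^d u_n`. -/
noncomputable def wtCoef (k0 lam d : ℝ) (N : ℤ) (A : ℂ) (j p q n : ℤ) : ℂ :=
  if N ≤ n then A * ((kk k0 lam (n + j) * wt k0 lam d n /
    (wt k0 lam d (n + p) * wt k0 lam d (n + q)) : ℝ) : ℂ) else 0

lemma exists_norm_wtCoef_le {k0 lam d : ℝ} (hk0 : 0 < k0) (hlam : 1 < lam) (hd : 1 ≤ d)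
    {N : ℤ} (hN : 0 ≤ N) (A : ℂ) (j p q : ℤ) :
    ∃ C, ∀ n, ‖wtCoef k0 lam d N A j p q n‖ ≤ C := by
  have hl : 0 < lam := by linarith
  refine ⟨‖A‖ * (lam ^ j / ((lam ^ p) ^ d * (lam ^ q) ^ d) * k0 ^ (1 - d)), fun n => ?_⟩
  unfold wtCoef
  split_ifs with hn
  · have hk := kk_pos hk0 hlam n
    have hw := wt_pos hk0 hlam d n
    have hp : 0 < (lam ^ p) ^ d := by positivity
    have hq : 0 < (lam ^ q) ^ d := by positivity
    have e : kk k0 lam (n + j) * wt k0 lam d n / (wt k0 lam d (n + p) * wt k0 lam d (n + q))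
        = lam ^ j / ((lam ^ p) ^ d * (lam ^ q) ^ d) * kk k0 lam n ^ (1 - d) := by
      rw [kk_add hlam, wt_add hk0 hlam, wt_add hk0 hlam, Real.rpow_sub hk, Real.rpow_one]
      change _ = _ * (_ / wt k0 lam d n)
      field_simp
    rw [e, norm_mul, Complex.norm_real, Real.norm_of_nonneg (by positivity)]
    have := Real.rpow_le_rpow_of_nonpos hk0 (le_kk hk0 hlam (hN.trans hn))
      (by linarith : 1 - d ≤ 0)
    gcongr
  · rw [norm_zero]
    positivity

lemma wtCoef_mul {k0 lam d : ℝ} (hk0 : 0 < k0) (hlam : 1 < lam) (N : ℤ) (A : ℂ)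
    (j p q n : ℤ) (U V : ℂ) :
    wtCoef k0 lam d N A j p q n * (wt k0 lam d (n + p) * U) * (wt k0 lam d (n + q) * V) =
      if N ≤ n then (wt k0 lam d n : ℂ) * (A * kk k0 lam (n + j) * U * V) else 0 := by
  unfold wtCoef
  split_ifs
  · have hp : (wt k0 lam d (n + p) : ℂ) ≠ 0 := by exact_mod_cast (wt_pos hk0 hlam d _).ne'
    have hq : (wt k0 lam d (n + q) : ℂ) ≠ 0 := by exact_mod_cast (wt_pos hk0 hlam d _).ne'
    push_cast
    field_simp
  · simp

/-- The nonlinearity `-B` in the weighted unknowns `k_n^d u_n`. -/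
noncomputable def wtQuad (a b c k0 lam d : ℝ) : (ℤ → ℂ) → ℤ → ℂ :=
  sabraQuad (wtCoef k0 lam d 1 (I * a) 1 2 1) (wtCoef k0 lam d 2 (I * b) 0 1 (-1))
    (wtCoef k0 lam d 3 (-(I * c)) (-1) (-1) (-2))

lemma exists_norm_wtQuad_coef_le {k0 lam d : ℝ} (hk0 : 0 < k0) (hlam : 1 < lam) (hd : 1 ≤ d)
    (a b c : ℝ) : ∃ C, (∀ n, ‖wtCoef k0 lam d 1 (I * a) 1 2 1 n‖ ≤ C) ∧
      (∀ n, ‖wtCoef k0 lam d 2 (I * b) 0 1 (-1) n‖ ≤ C) ∧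
      (∀ n, ‖wtCoef k0 lam d 3 (-(I * c)) (-1) (-1) (-2) n‖ ≤ C) := by
  obtain ⟨C₁, h₁⟩ := exists_norm_wtCoef_le hk0 hlam hd one_pos.le (I * a) 1 2 1
  obtain ⟨C₂, h₂⟩ := exists_norm_wtCoef_le hk0 hlam hd two_pos.le (I * b) 0 1 (-1)
  obtain ⟨C₃, h₃⟩ := exists_norm_wtCoef_le hk0 hlam hd three_pos.le (-(I * c)) (-1) (-1) (-2)
  exact ⟨max C₁ (max C₂ C₃), fun n => (h₁ n).trans (le_max_left _ _),
    fun n => (h₂ n).trans ((le_max_left _ _).trans (le_max_right _ _)),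
    fun n => (h₃ n).trans ((le_max_right _ _).trans (le_max_right _ _))⟩

lemma wtQuad_of_nonpos (a b c k0 lam d : ℝ) (x : ℤ → ℂ) {n : ℤ} (hn : n ≤ 0) :
    wtQuad a b c k0 lam d x n = 0 := by
  unfold wtQuad sabraQuad wtCoef
  rw [if_neg (by omega), if_neg (by omega), if_neg (by omega)]
  simp

lemma wt_mul_sub_sB {k0 lam d : ℝ} (hk0 : 0 < k0) (hlam : 1 < lam) (a b c : ℝ) (f : ℤ → ℂ)
    {u : ℤ → ℂ} (hu : ∀ n ≤ 0, u n = 0) {n : ℤ} (hn : 1 ≤ n) :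
    (wt k0 lam d n : ℂ) * (f n - sB a b c k0 lam u n) =
      wt k0 lam d n * f n + wtQuad a b c k0 lam d (fun k => wt k0 lam d k * u k) n := by
  have e₂ : u (n + 1) * (starRingEnd ℂ) (u (n + -1)) =
      if 2 ≤ n then u (n + 1) * (starRingEnd ℂ) (u (n + -1)) else 0 := by
    split_ifs with h
    · rfl
    · rw [hu (n + -1) (by omega)]
      simp
  have e₃ : u (n + -1) * u (n + -2) = if 3 ≤ n then u (n + -1) * u (n + -2) else 0 := by
    split_ifs with h
    · rfl
    · rw [hu (n + -2) (by omega)]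
      simp
  unfold wtQuad sabraQuad sB
  simp only [map_mul, Complex.conj_ofReal, wtCoef_mul hk0 hlam, if_pos hn, sub_eq_add_neg n,
    add_zero]
  split_ifs at e₂ e₃ ⊢ <;>
    linear_combination (wt k0 lam d n : ℂ) * I * b * kk k0 lam n * e₂
      - (wt k0 lam d n : ℂ) * I * c * kk k0 lam (n + -1) * e₃

lemma summable_nat_iff_int {y : ℤ → ℝ} (hy : ∀ n ≤ 0, y n = 0) :
    (Summable fun n : ℕ => y ((n : ℤ) + 1)) ↔ Summable y := by
  have hi : Function.Injective fun n : ℕ => (n : ℤ) + 1 := fun m n h => by simpa using h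
  refine hi.summable_iff fun n hn => hy n ?_
  by_contra h
  exact hn ⟨(n - 1).toNat, by simp only; omega⟩

lemma tsum_nat_eq_int {y : ℤ → ℝ} (hy : ∀ n ≤ 0, y n = 0) :
    ∑' n : ℕ, y ((n : ℤ) + 1) = ∑' n, y n := by
  have hi : Function.Injective fun n : ℕ => (n : ℤ) + 1 := fun m n h => by simpa using h
  refine hi.tsum_eq fun n hn => ?_
  have h : ¬ n ≤ 0 := fun h => hn (hy n h)
  exact ⟨(n - 1).toNat, by simp only; omega⟩

lemma inV_iff {k0 lam d : ℝ} (hk0 : 0 < k0) (hlam : 1 < lam) {u : ℤ → ℂ}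
    (hu : ∀ n ≤ 0, u n = 0) :
    InV k0 lam d u ↔ Memℓp (fun n => (wt k0 lam d n : ℂ) * u n) 2 := by
  rw [memℓp_gen_iff (by norm_num), InV]
  simp only [kk_rpow_mul_norm_sq hk0 hlam, ENNReal.toReal_ofNat, Real.rpow_two]
  rw [summable_nat_iff_int (y := fun n => ‖(wt k0 lam d n : ℂ) * u n‖ ^ 2)
    (fun n hn => by simp [hu n hn])]
  exact and_iff_right hu

lemma tsum_kk_rpow_eq_norm_sq {k0 lam d : ℝ} (hk0 : 0 < k0) (hlam : 1 < lam) {u : ℤ → ℂ}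
    {x : SeqL2} (hx0 : ∀ n ≤ 0, x n = 0) (hx : ∀ n, 1 ≤ n → x n = wt k0 lam d n * u n) :
    ∑' n : ℕ, kk k0 lam ((n : ℤ) + 1) ^ (2 * d) * ‖u ((n : ℤ) + 1)‖ ^ 2 = ‖x‖ ^ 2 := by
  have h : HasSum (fun n => ‖x n‖ ^ 2) (‖x‖ ^ 2) := by
    simpa using lp.hasSum_norm (p := 2) (by norm_num) x
  rw [← h.tsum_eq, ← tsum_nat_eq_int (fun n hn => by simp [hx0 n hn])]
  refine tsum_congr fun n => ?_
  rw [kk_rpow_mul_norm_sq hk0 hlam, hx _ (by omega)]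

lemma IsC1Solution.hasDerivAt_wt {a b c k0 lam d T : ℝ} (hk0 : 0 < k0) (hlam : 1 < lam)
    {uin f : ℤ → ℂ} (hf : ∀ n ≤ 0, f n = 0) {u : ℝ → ℤ → ℂ}
    (hu : IsC1Solution a b c k0 lam d T uin f u) {t : ℝ} (ht : t ∈ Set.Ioo (-T) T) (n : ℤ) :
    HasDerivAt (fun s => (wt k0 lam d n : ℂ) * u s n)
      (wt k0 lam d n * f n + wtQuad a b c k0 lam d (fun k => wt k0 lam d k * u t k) n) t := by
  by_cases hn : 1 ≤ n
  · rw [← wt_mul_sub_sB hk0 hlam a b c f (hu.2.1 t) hn]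
    exact ((hu.2.2.1 t ht).2 n hn).const_mul _
  · have hn' : n ≤ 0 := by omega
    rw [wtQuad_of_nonpos _ _ _ _ _ _ _ hn', hf n hn']
    simp only [hu.2.1 _ n hn', mul_zero, add_zero]
    exact hasDerivAt_const t 0

lemma IsC1Solution.exists_bound {a b c k0 lam d T : ℝ} (hk0 : 0 < k0) (hlam : 1 < lam)
    {uin f : ℤ → ℂ} {u : ℝ → ℤ → ℂ} (hu : IsC1Solution a b c k0 lam d T uin f u)
    {τ : ℝ} (hτ : τ < T) :
    ∃ M, ∀ t ∈ Set.Icc (-τ) τ, ∀ n, ‖(wt k0 lam d n : ℂ) * u t n‖ ≤ M := by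
  have hsub : Set.Icc (-τ) τ ⊆ Set.Ioo (-T) T :=
    fun t ht => ⟨by linarith [ht.1], by linarith [ht.2]⟩
  obtain ⟨S, hS⟩ := isCompact_Icc.exists_bound_of_continuousOn (hu.2.2.2.1.mono hsub)
  refine ⟨√S, fun t ht n => Real.le_sqrt_of_sq_le ?_⟩
  have hS' := (le_abs_self _).trans (hS t ht)
  refine le_trans ?_ hS'
  by_cases hn : 1 ≤ n
  · have h := (hu.2.2.1 t (hsub ht)).1.2.le_tsum (n - 1).toNat (fun j _ => by
      have := kk_pos hk0 hlam ((j : ℤ) + 1)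
      positivity)
    have e : (((n - 1).toNat : ℤ) + 1) = n := by omega
    rwa [e, kk_rpow_mul_norm_sq hk0 hlam] at h
  · rw [hu.2.1 t n (by omega)]
    simp only [mul_zero, norm_zero]
    rw [zero_pow two_ne_zero]
    exact tsum_nonneg fun j => by
      have := kk_pos hk0 hlam ((j : ℤ) + 1)
      positivity

lemma exists_norm_wtQuad_sub_le {k0 lam d : ℝ} (hk0 : 0 < k0) (hlam : 1 < lam) (hd : 1 ≤ d)
    (a b c M : ℝ) : ∃ L, 0 ≤ L ∧ ∀ x y : ℤ → ℂ, (∀ n, ‖x n‖ ≤ M) → (∀ n, ‖y n‖ ≤ M) →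
      ∀ Z, (∀ n, ‖x n - y n‖ ≤ Z) →
        ∀ n, ‖wtQuad a b c k0 lam d x n - wtQuad a b c k0 lam d y n‖ ≤ L * Z := by
  obtain ⟨C, h₁, h₂, h₃⟩ := exists_norm_wtQuad_coef_le hk0 hlam hd a b c
  have hC : 0 ≤ C := (norm_nonneg _).trans (h₁ 0)
  refine ⟨6 * C * |M|, by positivity, fun x y hx hy Z hxy n => ?_⟩
  exact norm_sabraQuad_sub_le h₁ h₂ h₃ (fun k => (hx k).trans (le_abs_self M))
    (fun k => (hy k).trans (le_abs_self M)) hxy n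

lemma IsC1Solution.eq_on_Icc {a b c k0 lam d T : ℝ} (hk0 : 0 < k0) (hlam : 1 < lam) (hd : 1 ≤ d)
    {uin f : ℤ → ℂ} (hf : ∀ n ≤ 0, f n = 0) {u v : ℝ → ℤ → ℂ}
    (hu : IsC1Solution a b c k0 lam d T uin f u) (hv : IsC1Solution a b c k0 lam d T uin f v)
    {σ : ℝ} (hσ : |σ| = 1) {τ : ℝ} (hτ : τ < T) {t : ℝ} (ht : t ∈ Set.Icc 0 τ) :
    v (σ * t) = u (σ * t) := by
  obtain ⟨Mu, hMu⟩ := hu.exists_bound hk0 hlam hτ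
  obtain ⟨Mv, hMv⟩ := hv.exists_bound hk0 hlam hτ
  obtain ⟨L, hL0, hL⟩ := exists_norm_wtQuad_sub_le hk0 hlam hd a b c (max Mu Mv)
  have hmem : ∀ s ∈ Set.Icc 0 τ, σ * s ∈ Set.Icc (-τ) τ := fun s hs => by
    rw [Set.mem_Icc, ← abs_le, abs_mul, hσ, one_mul, abs_of_nonneg hs.1]
    exact hs.2
  have hmem' : ∀ s ∈ Set.Icc 0 τ, σ * s ∈ Set.Ioo (-T) T := fun s hs =>
    ⟨by linarith [(hmem s hs).1], by linarith [(hmem s hs).2]⟩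
  have key := eq_zero_of_norm_deriv_le_mul_sup (ι := ℤ) (τ := τ) (L := L) (M := Mv + Mu)
    (z := fun n s => wt k0 lam d n * v (σ * s) n - wt k0 lam d n * u (σ * s) n)
    (z' := fun n s => σ • (wtQuad a b c k0 lam d (fun k => wt k0 lam d k * v (σ * s) k) n
      - wtQuad a b c k0 lam d (fun k => wt k0 lam d k * u (σ * s) k) n))
    (fun n => by simp [hu.1, hv.1])
    (fun n s hs => by
      have hlin : HasDerivAt (fun s : ℝ => σ * s) σ s := by
        simpa using (hasDerivAt_id s).const_mul σ
      have h := (hv.hasDerivAt_wt hk0 hlam hf (hmem' s hs) n).sub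
        (hu.hasDerivAt_wt hk0 hlam hf (hmem' s hs) n)
      rw [add_sub_add_left_eq_sub] at h
      exact HasDerivAt.scomp s h hlin)
    (fun n s hs => (norm_sub_le _ _).trans
      (add_le_add (hMv _ (hmem s hs) n) (hMu _ (hmem s hs) n)))
    hL0
    (fun s hs Z hZ n => by
      rw [norm_smul, Real.norm_eq_abs, hσ, one_mul]
      exact hL _ _ (fun k => (hMv _ (hmem s hs) k).trans (le_max_right _ _))
        (fun k => (hMu _ (hmem s hs) k).trans (le_max_left _ _)) Z hZ n)
  funext n
  have hw : (wt k0 lam d n : ℂ) ≠ 0 := by exact_mod_cast (wt_pos hk0 hlam d n).ne'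
  exact mul_left_cancel₀ hw (sub_eq_zero.mp (key n t ht))

lemma IsC1Solution.unique {a b c k0 lam d T : ℝ} (hk0 : 0 < k0) (hlam : 1 < lam) (hd : 1 ≤ d)
    {uin f : ℤ → ℂ} (hf : ∀ n ≤ 0, f n = 0) {u v : ℝ → ℤ → ℂ}
    (hu : IsC1Solution a b c k0 lam d T uin f u) (hv : IsC1Solution a b c k0 lam d T uin f v)
    {t : ℝ} (ht : t ∈ Set.Ioo (-T) T) : v t = u t := by
  rcases le_total 0 t with h | h
  · simpa using hu.eq_on_Icc hk0 hlam hd hf hv (σ := 1) (by simp) ht.2 ⟨h, le_rfl⟩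
  · simpa using hu.eq_on_Icc hk0 hlam hd hf hv (σ := -1) (by simp) (τ := -t) (t := -t)
      (by linarith [ht.1]) ⟨by linarith, le_rfl⟩

/-- An `ℓ²`-valued integral curve of the weighted vector field yields a `C¹` solution. -/
lemma isC1Solution_of_hasDerivAt {a b c k0 lam d T : ℝ} (hk0 : 0 < k0) (hlam : 1 < lam)
    {uin f : ℤ → ℂ} (huin : ∀ n ≤ 0, uin n = 0) (hf : ∀ n ≤ 0, f n = 0)
    {F : SeqL2 → SeqL2} (hFc : Continuous F)
    (hF : ∀ x n, F x n = wt k0 lam d n * f n + wtQuad a b c k0 lam d x n)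
    {x : ℝ → SeqL2} (hT : 0 < T) (hx0 : ∀ n, x 0 n = wt k0 lam d n * uin n)
    (hx : ∀ t ∈ Set.Ioo (-T) T, HasDerivAt x (F (x t)) t) :
    IsC1Solution a b c k0 lam d T uin f
      (fun t n => if n ≤ 0 then 0 else x t n / wt k0 lam d n) := by
  set u : ℝ → ℤ → ℂ := fun t n => if n ≤ 0 then 0 else x t n / wt k0 lam d n with hu
  have hw : ∀ n, (wt k0 lam d n : ℂ) ≠ 0 := fun n => by
    exact_mod_cast (wt_pos hk0 hlam d n).ne'
  have hu0 : ∀ t, ∀ n ≤ 0, u t n = 0 := fun t n hn => if_pos hn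
  have hu1 : ∀ t n, 1 ≤ n → x t n = wt k0 lam d n * u t n := fun t n hn => by
    simp only [hu]
    rw [if_neg (by omega)]
    field_simp [hw n]
  have hcoord : ∀ t ∈ Set.Ioo (-T) T, ∀ n, HasDerivAt (fun s => x s n) (F (x t) n) t :=
    fun t ht n => (lp.evalCLM ℝ (fun _ : ℤ => ℂ) 2 n).hasFDerivAt.comp_hasDerivAt t (hx t ht)
  have hF0 : ∀ y n, n ≤ 0 → F y n = 0 := fun y n hn => by
    rw [hF, wtQuad_of_nonpos _ _ _ _ _ _ _ hn, hf n hn]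
    simp
  have hxz : ∀ t ∈ Set.Ioo (-T) T, ∀ n ≤ 0, x t n = 0 := fun t ht n hn => by
    have h := isOpen_Ioo.is_const_of_deriv_eq_zero isPreconnected_Ioo
      (f := fun s => x s n) (s := Set.Ioo (-T) T)
      (fun s hs => (hcoord s hs n).differentiableAt.differentiableWithinAt)
      (fun s hs => by rw [(hcoord s hs n).deriv, hF0 _ n hn]; rfl) ht
      (y := 0) ⟨by linarith, hT⟩
    simpa [hx0, huin n hn] using h
  have hxu : ∀ t ∈ Set.Ioo (-T) T, ∀ n, x t n = wt k0 lam d n * u t n := fun t ht n => by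
    by_cases hn : n ≤ 0
    · rw [hxz t ht n hn, hu0 t n hn, mul_zero]
    · exact hu1 t n (by omega)
  have hFu : ∀ t ∈ Set.Ioo (-T) T, ∀ n, 1 ≤ n →
      F (x t) n = wt k0 lam d n * (f n - sB a b c k0 lam (u t) n) := fun t ht n hn => by
    rw [hF, wt_mul_sub_sB hk0 hlam a b c f (hu0 t) hn]
    congr 2
    exact funext (hxu t ht)
  have hxc : ContinuousOn x (Set.Ioo (-T) T) :=
    fun t ht => (hx t ht).continuousAt.continuousWithinAt
  refine ⟨fun n => ?_, hu0, fun t ht => ⟨?_, fun n hn => ?_⟩, ?_, ?_⟩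
  · have h0 : (0 : ℝ) ∈ Set.Ioo (-T) T := ⟨by linarith, hT⟩
    exact mul_left_cancel₀ (hw n) ((hxu 0 h0 n).symm.trans (hx0 n))
  · rw [inV_iff hk0 hlam (hu0 t), ← funext (hxu t ht)]
    exact lp.memℓp (x t)
  · have h := (hcoord t ht n).div_const (wt k0 lam d n : ℂ)
    rw [hFu t ht n hn, mul_div_cancel_left₀ _ (hw n)] at h
    refine h.congr_of_eventuallyEq (Filter.Eventually.of_forall fun s => ?_)
    simp only [hu]
    rw [if_neg (by omega)]
  · refine (hxc.norm.pow 2).congr fun t ht => ?_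
    exact tsum_kk_rpow_eq_norm_sq hk0 hlam (hxz t ht) (hu1 t)
  · refine ((hFc.comp_continuousOn hxc).norm.pow 2).congr fun t ht => ?_
    exact tsum_kk_rpow_eq_norm_sq hk0 hlam (u := fun n => f n - sB a b c k0 lam (u t) n)
      (hF0 _) (hFu t ht)

/-- for `u^{in}, f ∈ V_d`, `d ≥ 1`, there is `T > 0` such that the inviscid
sabra shell model has a unique solution `u ∈ C¹((-T,T), V_d)`. -/
theorem sabra_local_existence_uniqueness
    (a b c k0 lam : ℝ) (hk0 : 0 < k0) (hlam : 1 < lam) (habc : a + b + c = 0)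
    (d : ℝ) (hd : 1 ≤ d) (uin f : ℤ → ℂ)
    (huin : InV k0 lam d uin) (hf : InV k0 lam d f) :
    ∃ T : ℝ, 0 < T ∧
      ∃ u : ℝ → ℤ → ℂ, IsC1Solution a b c k0 lam d T uin f u ∧
        ∀ v : ℝ → ℤ → ℂ, IsC1Solution a b c k0 lam d T uin f v →
          ∀ t ∈ Set.Ioo (-T) T, v t = u t := by
  obtain ⟨C, h₁, h₂, h₃⟩ := exists_norm_wtQuad_coef_le hk0 hlam hd a b c
  let x₀ : SeqL2 := ⟨_, (inV_iff hk0 hlam huin.1).mp huin⟩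
  let g : SeqL2 := ⟨_, (inV_iff hk0 hlam hf.1).mp hf⟩
  obtain ⟨F, hFc, hF⟩ := exists_contDiff_field h₁ h₂ h₃ g
  obtain ⟨x, hx0, T, hT, hx⟩ :=
    (hFc.contDiffAt (x := x₀)).exists_forall_mem_closedBall_exists_eq_forall_mem_Ioo_hasDerivAt₀ 0
  rw [zero_sub, zero_add] at hx
  have hu := isC1Solution_of_hasDerivAt (a := a) (b := b) (c := c) hk0 hlam huin.1 hf.1
    hFc.continuous hF hT (fun n => by rw [hx0]) hx
  exact ⟨T, hT, _, hu, fun v hv t ht => hu.unique hk0 hlam hd hf.1 hv ht⟩
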